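/- For every integer e ≥ 5 and each i ∈ {2,3}, there exists a finite metabelian σ-group M of order 3^{6+e}, generated by two elements x and y satisfying w^3 = 1, y^3 = s₃^2 s₄, s₂^3 = s₄^2 s₅, s₃^3 = s₅^2, and t₃ = s₅ w^{i-1}, whose abelianization is isomorphic to (ZMod (3^e)) × (ZMod 3); moreover there exists a finite group G of order 3^{7+e} with the same abelianization, admitting a σ-automorphism, with second derived subgroup nontrivial and third derived subgroup trivial (derived length exactly 3), such that G/G'' is isomorphic to M. -/

import Mathlib

/-- The commutator `[a,b] = a⁻¹ * b⁻¹ * a * b`. -/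
def comm' {G : Type*} [Group G] (a b : G) : G := a⁻¹ * b⁻¹ * a * b

/-- `s₂ = [y,x]` and `s_j = [s_(j-1), x]` for `j ≥ 3`. -/
def sgen {G : Type*} [Group G] (x y : G) : ℕ → G
  | 0 => 1
  | 1 => 1
  | 2 => comm' y x
  | (n + 3) => comm' (sgen x y (n + 2)) x

/-- `t_j = [s_(j-1), y]` for `j ≥ 3`. -/
def tgenD {G : Type*} [Group G] (x y : G) (j : ℕ) : G := comm' (sgen x y (j - 1)) y

/-- `t₂ = [y,x]` and `t_j = [t_(j-1), y]` for `j ≥ 3`. -/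
def tgenB {G : Type*} [Group G] (x y : G) : ℕ → G
  | 0 => 1
  | 1 => 1
  | 2 => comm' y x
  | (n + 3) => comm' (tgenB x y (n + 2)) y

/-- A σ-group: a group admitting an automorphism acting as inversion on the
abelianization. -/
def IsSigmaGroup (G : Type*) [Group G] : Prop :=
  ∃ σ : G ≃* G, ∀ g : G, Abelianization.of (σ g) = (Abelianization.of g)⁻¹

/-- A group is metabelian if its commutator subgroup is abelian, i.e. the second
derived subgroup is trivial. -/
def IsMetabelian (G : Type*) [Group G] : Prop := derivedSeries G 2 = ⊥

/-!
Let `ℤ[ζ]` be the Eisenstein integers, `λ = ζ - 1` and `V = ℤ[ζ] / (λ ^ 5)`. The `λ`-coefficient of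
`u * conj v` is a `ζ`-invariant alternating form `V × V → ℤ / 9`, and `G` is generated by the
Heisenberg group of half this form and an element `x` of order `3 ^ (e + 2)` acting on `V` as `ζ`,
with the centre `ℤ / 9` embedded antidiagonally, through powers of `x ^ 3 ^ e` and multiples of
`9 ∈ V`. The generator `y` is the Heisenberg element of `1 ∈ V`, so that `s_j` lies over
`λ ^ (j - 1)`.

Commutators of Heisenberg elements are central, so the third derived subgroup is trivial. The
commutator subgroup lies over `λ V`, on which the form takes precisely the values divisible by `3`,
so the second derived subgroup is the subgroup of order `3` of the centre. The power relations hold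
in `G` up to elements of this subgroup, hence they hold in the quotient `M`. Finally, the form
changes sign under `v ↦ -conj v`, so this map extends to an automorphism of `G` which inverts `x`.
-/

/-! ### σ-groups and quotients by derived subgroups -/

open Multiplicative (ofAdd)
open scoped commutatorElement

section Groups

variable {G H : Type*} [Group G] [Group H]

lemma comm'_eq_commutatorElement (a b : G) : comm' a b = ⁅a⁻¹, b⁻¹⁆ := by
  simp only [comm', commutatorElement_def, inv_inv]

lemma comm'_eq_inv_mul_conj (a b : G) : comm' a b = a⁻¹ * (b⁻¹ * a * b) := by
  simp only [comm', mul_assoc]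

lemma map_comm' (f : G →* H) (a b : G) : f (comm' a b) = comm' (f a) (f b) := by
  simp only [comm', map_mul, map_inv]

lemma map_sgen (f : G →* H) (x y : G) : ∀ n, f (sgen x y n) = sgen (f x) (f y) n
  | 0 | 1 => map_one f
  | 2 => map_comm' f y x
  | n + 3 => by rw [sgen, map_comm', map_sgen f x y (n + 2), sgen]

lemma map_tgenD (f : G →* H) (x y : G) (n : ℕ) : f (tgenD x y n) = tgenD (f x) (f y) n := by
  rw [tgenD, map_comm', map_sgen, tgenD]

lemma isSigmaGroup_of_mul_mem_commutator (σ : G ≃* G) (hσ : ∀ g, σ g * g ∈ commutator G) :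
    IsSigmaGroup G := by
  refine ⟨σ, fun g => ?_⟩
  rw [eq_inv_iff_mul_eq_one, ← map_mul, ← MonoidHom.mem_ker, Abelianization.ker_of]
  exact hσ g

lemma IsSigmaGroup.quotient (hG : IsSigmaGroup G) (N : Subgroup G)
    [hN : N.Characteristic] : IsSigmaGroup (G ⧸ N) := by
  obtain ⟨σ, hσ⟩ := hG
  refine ⟨QuotientGroup.congr N N σ (Subgroup.characteristic_iff_map_eq.1 hN σ), ?_⟩
  refine QuotientGroup.mk_surjective.forall.2 fun g => ?_
  have h := congrArg (Abelianization.map (QuotientGroup.mk' N)) (hσ g)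
  rwa [map_inv, Abelianization.map_of, Abelianization.map_of] at h

lemma isMetabelian_quotient_derivedSeries_two : IsMetabelian (G ⧸ derivedSeries G 2) := by
  rw [IsMetabelian, ← map_derivedSeries_eq (QuotientGroup.mk'_surjective (derivedSeries G 2)) 2,
    QuotientGroup.map_mk'_self]

/-- Passing to the quotient by a subgroup of the commutator subgroup does not change the
abelianization. -/
noncomputable def abelianizationQuotientEquiv (N : Subgroup G) [N.Normal]
    (hN : N ≤ commutator G) : Abelianization (G ⧸ N) ≃* Abelianization G :=
  (QuotientGroup.quotientMulEquivOfEq (by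
    rw [← derivedSeries_one, ← derivedSeries_one,
      map_derivedSeries_eq (QuotientGroup.mk'_surjective N)])).trans
    (QuotientGroup.quotientQuotientEquivQuotient N (commutator G) hN)

lemma closure_pair_map_of_surjective {f : G →* H} (hf : Function.Surjective f) {x y : G}
    (h : Subgroup.closure {x, y} = ⊤) : Subgroup.closure {f x, f y} = ⊤ := by
  rw [← Set.image_pair, ← MonoidHom.map_closure, h, Subgroup.map_top_of_surjective f hf]

end Groups

/-! ### Twisted Heisenberg groups -/

/-- The input of the construction `TwistedHeisenberg`: a group `K` acting on the Heisenberg group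
of an alternating form on `V` with values in `A`, and a map `a ↦ (toK a, toV a)` along which the
centre `A` of the Heisenberg group is identified with a subgroup of `K × V`. -/
structure HeisenbergData (K V A : Type*) [AddCommGroup K] [AddCommGroup V] [AddCommGroup A] where
  act : K →+ AddAut V
  form : V →+ V →+ A
  toK : A →+ K
  toV : A →+ V
  form_self : ∀ v, form v v = 0
  form_act : ∀ k u v, form (act k u) (act k v) = form u v
  form_toV : ∀ a v, form (toV a) v = 0
  act_toK : ∀ a, act (toK a) = 0
  act_toV : ∀ k a, act k (toV a) = toV a

/-- The set `K × V` with the group structure in which `⟨k, v⟩` is the normal form of the product of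
`k ∈ K` and the Heisenberg element `v ∈ V`. It is the quotient of the semidirect product of `K` with
the Heisenberg group of `D.form` by the identification of `a ∈ A` with `(D.toK a, D.toV a)`. -/
@[ext] structure TwistedHeisenberg {K V A : Type*} [AddCommGroup K] [AddCommGroup V]
    [AddCommGroup A] (D : HeisenbergData K V A) where
  k : K
  v : V

section TwistedHeisenberg

variable {K V A : Type*} [AddCommGroup K] [AddCommGroup V] [AddCommGroup A]
  {D : HeisenbergData K V A}

namespace HeisenbergData

lemma form_swap (u v : V) : D.form v u = -D.form u v := by
  have h := D.form_self (u + v)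
  simp only [map_add, AddMonoidHom.add_apply, D.form_self, zero_add, add_zero] at h
  exact eq_neg_of_add_eq_zero_left h

lemma form_toV_right (v : V) (a : A) : D.form v (D.toV a) = 0 := by
  rw [form_swap, D.form_toV, neg_zero]

lemma act_add_apply (k l : K) (v : V) : D.act (k + l) v = D.act l (D.act k v) := by
  rw [add_comm, map_add, AddAut.add_apply]

lemma act_toK_apply (a : A) (v : V) : D.act (D.toK a) v = v := by
  rw [D.act_toK, AddAut.zero_apply]

end HeisenbergData

namespace TwistedHeisenberg

open HeisenbergData

instance : Mul (TwistedHeisenberg D) :=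
  ⟨fun p q => ⟨p.k + q.k + D.toK (D.form (D.act q.k p.v) q.v),
    D.act q.k p.v + q.v + D.toV (D.form (D.act q.k p.v) q.v)⟩⟩

instance : One (TwistedHeisenberg D) := ⟨⟨0, 0⟩⟩

instance : Inv (TwistedHeisenberg D) := ⟨fun p => ⟨-p.k, -D.act (-p.k) p.v⟩⟩

lemma mul_def (p q : TwistedHeisenberg D) :
    p * q = ⟨p.k + q.k + D.toK (D.form (D.act q.k p.v) q.v),
      D.act q.k p.v + q.v + D.toV (D.form (D.act q.k p.v) q.v)⟩ := rfl

lemma one_def : (1 : TwistedHeisenberg D) = ⟨0, 0⟩ := rfl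

lemma inv_def (p : TwistedHeisenberg D) : p⁻¹ = ⟨-p.k, -D.act (-p.k) p.v⟩ := rfl

protected lemma mul_assoc (p q r : TwistedHeisenberg D) : p * q * r = p * (q * r) := by
  simp only [mul_def, act_add_apply, act_toK_apply]
  simp only [map_add, D.act_toV, AddMonoidHom.add_apply, D.form_toV, form_toV_right, D.form_act,
    add_zero, TwistedHeisenberg.mk.injEq]
  constructor <;> abel

instance : Group (TwistedHeisenberg D) :=
  Group.ofLeftAxioms TwistedHeisenberg.mul_assoc
    (fun p => by simp [mul_def, one_def])
    (fun p => by simp [mul_def, one_def, inv_def, D.form_self])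

/-- The underlying set is `K × V`. -/
def equivProd (D : HeisenbergData K V A) : TwistedHeisenberg D ≃ K × V where
  toFun p := (p.k, p.v)
  invFun p := ⟨p.1, p.2⟩
  left_inv _ := rfl
  right_inv _ := rfl

instance [Finite K] [Finite V] : Finite (TwistedHeisenberg D) := .of_equiv _ (equivProd D).symm

lemma card_eq : Nat.card (TwistedHeisenberg D) = Nat.card K * Nat.card V := by
  rw [Nat.card_congr (equivProd D), Nat.card_prod]

/-- The inclusion of the subgroup `K`. -/
def ofK (D : HeisenbergData K V A) : Multiplicative K →* TwistedHeisenberg D where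
  toFun k := ⟨k.toAdd, 0⟩
  map_one' := rfl
  map_mul' k l := by simp [mul_def]

/-- The image of the element `(u, a)` of the Heisenberg group `V × A`, whose multiplication is
`(u, a) * (v, b) = (u + v, a + b + D.form u v)`. -/
def heis (D : HeisenbergData K V A) (u : V) (a : A) : TwistedHeisenberg D :=
  ⟨D.toK a, u + D.toV a⟩

lemma heis_zero_zero : heis D 0 0 = 1 := by simp [heis, one_def]

lemma ofK_mul_heis (p : TwistedHeisenberg D) : ofK D (ofAdd p.k) * heis D p.v 0 = p := by
  simp [ofK, heis, mul_def]

lemma heis_mul_heis (u v : V) (a b : A) :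
    heis D u a * heis D v b = heis D (u + v) (a + b + D.form u v) := by
  simp only [heis, mul_def, act_toK_apply, map_add, AddMonoidHom.add_apply,
    D.form_toV, form_toV_right, add_zero, TwistedHeisenberg.mk.injEq, true_and]
  abel

lemma inv_heis (u : V) (a : A) : (heis D u a)⁻¹ = heis D (-u) (-a) := by
  rw [inv_eq_iff_mul_eq_one, heis_mul_heis]
  simp [D.form_self, heis_zero_zero]

lemma heis_pow (u : V) (a : A) (n : ℕ) : heis D u a ^ n = heis D (n • u) (n • a) := by
  induction n with
  | zero => simp [heis_zero_zero]
  | succ n ih =>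
    rw [pow_succ, ih, heis_mul_heis, map_nsmul, AddMonoidHom.nsmul_apply, D.form_self, smul_zero,
      add_zero, succ_nsmul, succ_nsmul]

theorem eq_top_of_heis_mem {S : Subgroup (TwistedHeisenberg D)} {s : Set V}
    (hs : AddSubgroup.closure s = ⊤) (hK : ∀ k, ofK D (ofAdd k) ∈ S) (hA : ∀ a, heis D 0 a ∈ S)
    (hV : ∀ u ∈ s, ∃ a, heis D u a ∈ S) : S = ⊤ := by
  have change_centre {u : V} {a : A} (h : heis D u a ∈ S) (b : A) : heis D u b ∈ S := by
    simpa only [heis_mul_heis, add_zero, map_zero, add_sub_cancel] using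
      mul_mem h (hA (b - a))
  have heis_mem (u : V) : heis D u 0 ∈ S := by
    have hu : u ∈ AddSubgroup.closure s := hs ▸ AddSubgroup.mem_top u
    induction hu using AddSubgroup.closure_induction with
    | mem u hu => exact (hV u hu).elim fun a ha => change_centre ha 0
    | zero => exact hA 0
    | add u v _ _ hu hv => exact change_centre ((heis_mul_heis (D := D) u v 0 0) ▸ mul_mem hu hv) 0
    | neg u _ hu => exact change_centre ((inv_heis (D := D) u 0) ▸ inv_mem hu) 0
  refine (Subgroup.eq_top_iff' S).2 fun p => ?_
  rw [← ofK_mul_heis p]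
  exact mul_mem (hK p.k) (heis_mem p.v)

lemma conj_heis_ofK (u : V) (a : A) (k : K) :
    (ofK D (ofAdd k))⁻¹ * heis D u a * ofK D (ofAdd k) = heis D (D.act k u) a := by
  simp [ofK, heis, mul_def, inv_def, D.act_toV]

lemma commutatorElement_heis (u v : V) (a b : A) :
    ⁅heis D u a, heis D v b⁆ = heis D 0 (2 • D.form u v) := by
  rw [commutatorElement_def, inv_heis, inv_heis, heis_mul_heis, heis_mul_heis, heis_mul_heis]
  congr 1
  · abel
  · simp only [map_add, map_neg, AddMonoidHom.add_apply, AddMonoidHom.neg_apply, D.form_self,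
      form_swap u v]
    abel

lemma comm'_heis_heis (u v : V) (a b : A) :
    comm' (heis D u a) (heis D v b) = heis D 0 (2 • D.form u v) := by
  simp [comm'_eq_commutatorElement, inv_heis, commutatorElement_heis]

lemma comm'_heis_ofK (u : V) (a : A) (k : K) :
    comm' (heis D u a) (ofK D (ofAdd k)) = heis D (D.act k u - u) (-D.form u (D.act k u)) := by
  rw [comm'_eq_inv_mul_conj, conj_heis_ofK, inv_heis, heis_mul_heis, neg_add_cancel, zero_add,
    map_neg, AddMonoidHom.neg_apply, neg_add_eq_sub]

/-- The image `a ↦ heis D 0 a` of the centre of the Heisenberg group. -/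
def central (D : HeisenbergData K V A) : Multiplicative A →* TwistedHeisenberg D where
  toFun a := heis D 0 a.toAdd
  map_one' := heis_zero_zero
  map_mul' a b := by simp [heis_mul_heis]

lemma central_injective (h : Function.Injective D.toK) : Function.Injective (central D) :=
  fun _ _ hab => h (congrArg TwistedHeisenberg.k hab)

/-! ### The derived series of a twisted Heisenberg group -/

lemma exists_eq_heis_of_mem_commutator {p : TwistedHeisenberg D}
    (hp : p ∈ commutator (TwistedHeisenberg D)) : ∃ u a, p = heis D u a := by
  let π : TwistedHeisenberg D →* Multiplicative (K ⧸ D.toK.range) :=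
    { toFun q := ofAdd (q.k : K ⧸ D.toK.range)
      map_one' := rfl
      map_mul' q r := by simp [mul_def, ← ofAdd_add] }
  obtain ⟨a, ha⟩ : p.k ∈ D.toK.range :=
    (QuotientAddGroup.eq_zero_iff _).1 (Abelianization.commutator_subset_ker π hp)
  exact ⟨p.v - D.toV a, a, TwistedHeisenberg.ext ha.symm (sub_add_cancel _ _).symm⟩

theorem derivedSeries_two_le_range_central :
    derivedSeries (TwistedHeisenberg D) 2 ≤ (central D).range := by
  rw [derivedSeries_succ, derivedSeries_one, Subgroup.commutator_le]
  intro p hp q hq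
  obtain ⟨u, a, rfl⟩ := exists_eq_heis_of_mem_commutator hp
  obtain ⟨v, b, rfl⟩ := exists_eq_heis_of_mem_commutator hq
  exact ⟨ofAdd (2 • D.form u v), (commutatorElement_heis u v a b).symm⟩

theorem derivedSeries_three_eq_bot : derivedSeries (TwistedHeisenberg D) 3 = ⊥ := by
  rw [derivedSeries_succ, eq_bot_iff, Subgroup.commutator_le]
  intro p hp q hq
  obtain ⟨a, rfl⟩ := derivedSeries_two_le_range_central hp
  obtain ⟨b, rfl⟩ := derivedSeries_two_le_range_central hq
  rw [Subgroup.mem_bot, commutatorElement_eq_one_iff_mul_comm, ← map_mul, mul_comm, map_mul]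

section Abelianization

variable {X Y : Type*} [AddCommGroup X] [AddCommGroup Y] (g : K →+ Y) (f : V →+ X)

/-- The homomorphism to `Y × X` induced by `g : K →+ Y` and a `K`-invariant `f : V →+ X` which both
kill the image of the centre of the Heisenberg group. -/
def mapProd (hg : ∀ a, g (D.toK a) = 0) (hf : ∀ a, f (D.toV a) = 0)
    (hact : ∀ k v, f (D.act k v) = f v) : TwistedHeisenberg D →* Multiplicative (Y × X) where
  toFun p := ofAdd (g p.k, f p.v)
  map_one' := by simp [one_def]
  map_mul' p q := by simp [mul_def, ← ofAdd_add, hg, hf, hact]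

variable {g f} {hg : ∀ a, g (D.toK a) = 0} {hf : ∀ a, f (D.toV a) = 0}
  {hact : ∀ k v, f (D.act k v) = f v}

lemma mem_ker_mapProd {p : TwistedHeisenberg D} :
    p ∈ (mapProd g f hg hf hact).ker ↔ g p.k = 0 ∧ f p.v = 0 := by
  rw [MonoidHom.mem_ker]
  exact Prod.mk_eq_zero

lemma mapProd_surjective (hg' : Function.Surjective g) (hf' : Function.Surjective f) :
    Function.Surjective (mapProd g f hg hf hact) := by
  intro z
  obtain ⟨k, hk⟩ := hg' z.toAdd.1
  obtain ⟨v, hv⟩ := hf' z.toAdd.2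
  exact ⟨⟨k, v⟩, Prod.ext hk hv⟩

theorem ker_mapProd_eq_commutator (hform : ∀ a, ∃ u v, 2 • D.form u v = a)
    (hg' : ∀ k, g k = 0 → ∃ a, D.toK a = k) (hf' : ∀ v, f v = 0 → ∃ k u, D.act k u - u = v) :
    (mapProd g f hg hf hact).ker = commutator (TwistedHeisenberg D) := by
  refine le_antisymm (fun p hp => ?_) (Abelianization.commutator_subset_ker _)
  have comm'_mem (p q : TwistedHeisenberg D) : comm' p q ∈ commutator (TwistedHeisenberg D) := by
    rw [comm'_eq_commutatorElement]
    exact Subgroup.commutator_mem_commutator (Subgroup.mem_top _) (Subgroup.mem_top _)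
  have central_mem (a : A) : heis D 0 a ∈ commutator (TwistedHeisenberg D) := by
    obtain ⟨u, v, rfl⟩ := hform a
    rw [← comm'_heis_heis u v 0 0]
    exact comm'_mem _ _
  obtain ⟨hk, hv⟩ := mem_ker_mapProd.1 hp
  obtain ⟨a, ha⟩ := hg' p.k hk
  obtain ⟨k, u, hu⟩ := hf' (p.v - D.toV a) (by rw [map_sub, hv, hf, sub_zero])
  have hp' : p = comm' (heis D u 0) (ofK D (ofAdd k)) * heis D 0 (a + D.form u (D.act k u)) := by
    rw [comm'_heis_ofK, heis_mul_heis, hu]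
    ext <;> simp [heis, ha]
  rw [hp']
  exact mul_mem (comm'_mem _ _) (central_mem _)

theorem derivedSeries_two_eq_map_central
    (hker : (mapProd g f hg hf hact).ker = commutator (TwistedHeisenberg D)) (S : AddSubgroup A)
    (hS : ∀ u v, f u = 0 → f v = 0 → 2 • D.form u v ∈ S)
    (hS' : ∀ a ∈ S, ∃ u v, f u = 0 ∧ f v = 0 ∧ 2 • D.form u v = a) :
    derivedSeries (TwistedHeisenberg D) 2 = S.toSubgroup.map (central D) := by
  have f_eq_zero {u : V} {a : A} (h : heis D u a ∈ commutator (TwistedHeisenberg D)) :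
      f u = 0 := by
    rw [← hker, mem_ker_mapProd] at h
    simpa [heis, hf] using h.2
  have heis_mem {u : V} (h : f u = 0) : heis D u 0 ∈ commutator (TwistedHeisenberg D) := by
    rw [← hker, mem_ker_mapProd]
    simpa [heis] using h
  rw [derivedSeries_succ, derivedSeries_one]
  refine le_antisymm (Subgroup.commutator_le.2 fun p hp q hq => ?_) ?_
  · obtain ⟨u, a, rfl⟩ := exists_eq_heis_of_mem_commutator hp
    obtain ⟨v, b, rfl⟩ := exists_eq_heis_of_mem_commutator hq
    exact ⟨ofAdd (2 • D.form u v), hS u v (f_eq_zero hp) (f_eq_zero hq),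
      (commutatorElement_heis u v a b).symm⟩
  · rintro - ⟨a, ha, rfl⟩
    obtain ⟨u, v, hu, hv, huv⟩ := hS' a.toAdd ha
    have h := Subgroup.commutator_mem_commutator (heis_mem hu) (heis_mem hv)
    rwa [commutatorElement_heis, huv] at h

end Abelianization

/-- The automorphism of `TwistedHeisenberg D` which is `-1` on `K` and `τ` on `V`. -/
def negMap (τ : V ≃+ V) (hact : ∀ k v, τ (D.act k v) = D.act (-k) (τ v))
    (hform : ∀ u v, D.form (τ u) (τ v) = -D.form u v) (htoV : ∀ a, τ (D.toV a) = -D.toV a) :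
    TwistedHeisenberg D ≃* TwistedHeisenberg D where
  toFun p := ⟨-p.k, τ p.v⟩
  invFun p := ⟨-p.k, τ.symm p.v⟩
  left_inv p := by simp
  right_inv p := by simp
  map_mul' p q := by
    simp only [mul_def, map_add, hact, htoV, neg_add, ← map_neg D.toK, ← map_neg D.toV,
      ← hform]

end TwistedHeisenberg

end TwistedHeisenberg

/-! ### The lattice `ℤ[ζ] / (λ ^ 5)` -/

section ZModMul

variable (m n : ℕ)

/-- Multiplication by `m` as a homomorphism from `ZMod n` to `ZMod (m * n)`. -/
def zmodMul : ZMod n →+ ZMod (m * n) :=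
  ZMod.lift n ⟨zmultiplesHom (ZMod (m * n)) (m : ZMod (m * n)), by
    rw [zmultiplesHom_apply, natCast_zsmul, nsmul_eq_mul, ← Nat.cast_mul,
      ZMod.natCast_eq_zero_iff, mul_comm]⟩

/-- Reduction modulo the first factor. -/
def redLeft : ZMod (m * n) →+* ZMod m := ZMod.castHom (dvd_mul_right m n) (ZMod m)

/-- Reduction modulo the second factor. -/
def redRight : ZMod (m * n) →+* ZMod n := ZMod.castHom (dvd_mul_left n m) (ZMod n)

variable {m n}

lemma zmodMul_intCast (a : ℤ) : zmodMul m n a = m * a := by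
  rw [zmodMul, ZMod.lift_coe, zmultiplesHom_apply, zsmul_eq_mul]
  exact mul_comm _ _

lemma zmodMul_redRight (b : ZMod (m * n)) : zmodMul m n (redRight m n b) = m • b := by
  obtain ⟨b, rfl⟩ := ZMod.intCast_surjective b
  rw [map_intCast, zmodMul_intCast, nsmul_eq_mul]

lemma redRight_zmodMul (a : ZMod n) : redRight m n (zmodMul m n a) = m • a := by
  obtain ⟨a, rfl⟩ := ZMod.intCast_surjective a
  rw [zmodMul_intCast, map_mul, map_natCast, map_intCast, nsmul_eq_mul]

lemma redLeft_zmodMul (a : ZMod n) : redLeft m n (zmodMul m n a) = 0 := by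
  obtain ⟨a, rfl⟩ := ZMod.intCast_surjective a
  rw [zmodMul_intCast, map_mul, map_natCast, ZMod.natCast_self, zero_mul]

lemma exists_zmodMul_eq_of_redLeft_eq_zero {b : ZMod (m * n)} (hb : redLeft m n b = 0) :
    ∃ a, zmodMul m n a = b := by
  obtain ⟨b, rfl⟩ := ZMod.intCast_surjective b
  rw [map_intCast, ZMod.intCast_zmod_eq_zero_iff_dvd] at hb
  obtain ⟨a, rfl⟩ := hb
  exact ⟨a, by rw [zmodMul_intCast, Int.cast_mul, Int.cast_natCast]⟩

lemma zmodMul_injective [NeZero m] : Function.Injective (zmodMul m n) := by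
  refine (injective_iff_map_eq_zero _).2 fun a ha => ?_
  obtain ⟨a, rfl⟩ := ZMod.intCast_surjective a
  rw [zmodMul_intCast, ← Int.cast_natCast m, ← Int.cast_mul, ZMod.intCast_zmod_eq_zero_iff_dvd,
    Nat.cast_mul] at ha
  exact (ZMod.intCast_zmod_eq_zero_iff_dvd a n).2
    (Int.dvd_of_mul_dvd_mul_left (NeZero.ne (m : ℤ)) ha)

lemma redLeft_surjective : Function.Surjective (redLeft m n) := ZMod.castHom_surjective _

lemma redRight_surjective : Function.Surjective (redRight m n) := ZMod.castHom_surjective _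

end ZModMul

/-- The additive group of `ℤ[ζ] / (λ ^ 5)`, where `ζ` is a primitive cube root of unity and
`λ = ζ - 1`; the pair `(a, b)` stands for `a + b λ`, and `λ ^ 2 = -3 - 3 λ`. -/
abbrev EisensteinQuotient : Type := ZMod (3 * 9) × ZMod 9

namespace EisensteinQuotient

/-- Multiplication by `ζ`. -/
def zeta : AddAut EisensteinQuotient where
  toFun v := (v.1 - zmodMul 3 9 v.2, redRight 3 9 v.1 - 2 • v.2)
  invFun v := (-2 • v.1 + zmodMul 3 9 v.2, v.2 - redRight 3 9 v.1)
  left_inv v := by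
    ext <;> simp only [map_sub, map_nsmul, zmodMul_redRight, redRight_zmodMul] <;> ring
  right_inv v := by
    ext <;> simp only [map_add, map_sub, map_zsmul, zmodMul_redRight, redRight_zmodMul] <;> ring
  map_add' u v := by ext <;> simp only [Prod.fst_add, Prod.snd_add, map_add] <;> ring

lemma zeta_apply (v : EisensteinQuotient) :
    zeta v = (v.1 - zmodMul 3 9 v.2, redRight 3 9 v.1 - 2 • v.2) := rfl

lemma three_nsmul_zeta : 3 • zeta = 0 := by
  ext1 v
  change zeta (zeta (zeta v)) = v
  ext <;> simp only [zeta_apply, map_sub, map_nsmul, zmodMul_redRight, redRight_zmodMul] <;> ring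

/-- Half of the `λ`-coefficient of `u` times the complex conjugate of `v`, the half of `1` being `5`
in `ZMod 9`. -/
def form : EisensteinQuotient →+ EisensteinQuotient →+ ZMod 9 :=
  AddMonoidHom.mk' (fun u => AddMonoidHom.mk'
    (fun v => 5 * (u.2 * redRight 3 9 v.1 - v.2 * redRight 3 9 u.1))
    (fun v w => by simp only [Prod.fst_add, Prod.snd_add, map_add]; ring))
    (fun u v => by
      ext w : 1
      simp only [AddMonoidHom.mk'_apply, AddMonoidHom.add_apply, Prod.fst_add, Prod.snd_add,
        map_add]
      ring)

lemma form_apply (u v : EisensteinQuotient) :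
    form u v = 5 * (u.2 * redRight 3 9 v.1 - v.2 * redRight 3 9 u.1) := rfl

lemma form_zeta (u v : EisensteinQuotient) : form (zeta u) (zeta v) = form u v := by
  simp only [form_apply, zeta_apply, map_sub, redRight_zmodMul]
  ring

/-- Multiplication by `9`, as a map from `ZMod 9`. -/
def nineMul : ZMod 9 →+ EisensteinQuotient :=
  (AddMonoidHom.inl _ _).comp ((zmodMul 3 9).comp (AddMonoidHom.mulLeft 3))

lemma form_nineMul (a : ZMod 9) (v : EisensteinQuotient) : form (nineMul a) v = 0 := by
  have h : redRight 3 9 (nineMul a).1 = 0 := by revert a; decide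
  rw [form_apply, h]
  simp [nineMul]

lemma zeta_nineMul (a : ZMod 9) : zeta (nineMul a) = nineMul a := by
  revert a; decide

/-- The negative of complex conjugation. -/
def negConj : EisensteinQuotient ≃+ EisensteinQuotient where
  toFun v := (-v.1 + zmodMul 3 9 v.2, v.2)
  invFun v := (-v.1 + zmodMul 3 9 v.2, v.2)
  left_inv v := by ext <;> simp
  right_inv v := by ext <;> simp
  map_add' u v := by ext <;> simp only [Prod.fst_add, Prod.snd_add, map_add]; ring

lemma negConj_apply (v : EisensteinQuotient) : negConj v = (-v.1 + zmodMul 3 9 v.2, v.2) := rfl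

lemma form_negConj (u v : EisensteinQuotient) : form (negConj u) (negConj v) = -form u v := by
  simp only [form_apply, negConj_apply, map_add, map_neg, redRight_zmodMul]
  ring

lemma zeta_negConj_zeta (v : EisensteinQuotient) : zeta (negConj (zeta v)) = negConj v := by
  ext <;> simp only [negConj_apply, zeta_apply, map_add, map_sub, map_neg, map_nsmul,
    redRight_zmodMul, zmodMul_redRight] <;> ring

lemma negConj_nineMul (a : ZMod 9) : negConj (nineMul a) = -nineMul a := by
  revert a; decide

/-- The reduction `ℤ[ζ] / (λ ^ 5) → ℤ[ζ] / (λ)`. -/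
def residue : EisensteinQuotient →+ ZMod 3 :=
  (redLeft 3 9).toAddMonoidHom.comp (AddMonoidHom.fst _ _)

lemma residue_surjective : Function.Surjective residue :=
  redLeft_surjective.comp Prod.fst_surjective

lemma residue_apply (v : EisensteinQuotient) : residue v = redLeft 3 9 v.1 := rfl

lemma residue_nineMul (a : ZMod 9) : residue (nineMul a) = 0 := by
  revert a; decide

lemma residue_zeta (v : EisensteinQuotient) : residue (zeta v) = residue v := by
  rw [residue_apply, zeta_apply, map_sub, redLeft_zmodMul, sub_zero, residue_apply]

lemma residue_negConj (v : EisensteinQuotient) : residue (negConj v) = -residue v := by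
  rw [residue_apply, negConj_apply, map_add, map_neg, redLeft_zmodMul, add_zero, residue_apply]

lemma exists_zeta_sub_eq {v : EisensteinQuotient} (hv : residue v = 0) : ∃ u, zeta u - u = v := by
  rw [residue_apply] at hv
  obtain ⟨a, ha⟩ := exists_zmodMul_eq_of_redLeft_eq_zero hv
  obtain ⟨b, hb⟩ := redRight_surjective (m := 3) (v.2 - 3 * a)
  refine ⟨(b, -a), Prod.ext ?_ ?_⟩
  · simp [zeta_apply, ha]
  · simp only [zeta_apply, hb, Prod.snd_sub]
    ring

lemma two_nsmul_form (a : ZMod 9) : 2 • form (0, a) (1, 0) = a := by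
  revert a; decide

lemma three_mul_mem_zmultiples (a : ZMod 9) : 3 * a ∈ AddSubgroup.zmultiples (3 : ZMod 9) := by
  obtain ⟨n, rfl⟩ := ZMod.natCast_zmod_surjective a
  rw [mul_comm, ← nsmul_eq_mul]
  exact AddSubgroup.nsmul_mem_zmultiples 3 n

lemma two_nsmul_form_mem {u v : EisensteinQuotient} (hu : residue u = 0) (hv : residue v = 0) :
    2 • form u v ∈ AddSubgroup.zmultiples (3 : ZMod 9) := by
  rw [residue_apply] at hu hv
  obtain ⟨a, ha⟩ := exists_zmodMul_eq_of_redLeft_eq_zero hu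
  obtain ⟨b, hb⟩ := exists_zmodMul_eq_of_redLeft_eq_zero hv
  have h : 2 • form u v = 3 * (2 * (5 * (u.2 * b - v.2 * a))) := by
    rw [form_apply, ← ha, ← hb, redRight_zmodMul, redRight_zmodMul]
    ring
  rw [h]
  exact three_mul_mem_zmultiples _

lemma exists_two_nsmul_form_eq {a : ZMod 9} (ha : a ∈ AddSubgroup.zmultiples 3) :
    ∃ u v, residue u = 0 ∧ residue v = 0 ∧ 2 • form u v = a := by
  obtain ⟨n, rfl⟩ := AddSubgroup.mem_zmultiples_iff.1 ha
  refine ⟨n • (0, 1), (3, 0), ?_, by decide, ?_⟩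
  · rw [map_zsmul, residue_apply, map_zero, smul_zero]
  · rw [map_zsmul, AddMonoidHom.zsmul_apply, smul_comm]
    congr 1

lemma closure_one_lambda :
    AddSubgroup.closure {((1, 0) : EisensteinQuotient), ((0, 1) : EisensteinQuotient)} = ⊤ := by
  refine (AddSubgroup.eq_top_iff' _).2 fun v => AddSubgroup.mem_closure_pair.2 ?_
  obtain ⟨m, hm⟩ := ZMod.intCast_surjective v.1
  obtain ⟨n, hn⟩ := ZMod.intCast_surjective v.2
  exact ⟨m, n, by ext <;> simp [hm, hn]⟩

variable (e : ℕ)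

/-- The homomorphism sending `1` to multiplication by `ζ`. -/
def zetaHom : ZMod (3 ^ e * 9) →+ AddAut EisensteinQuotient :=
  ZMod.lift (3 ^ e * 9) ⟨zmultiplesHom (AddAut EisensteinQuotient) zeta, by
    rw [zmultiplesHom_apply, natCast_zsmul, show 3 ^ e * 9 = 3 * (3 ^ e * 3) by ring, mul_nsmul,
      three_nsmul_zeta, nsmul_zero]⟩

lemma zetaHom_intCast (n : ℤ) : zetaHom e n = n • zeta := ZMod.lift_coe _ _ n

lemma zetaHom_one : zetaHom e 1 = zeta := by
  rw [← Int.cast_one, zetaHom_intCast, one_zsmul]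

lemma zetaHom_induction {P : AddAut EisensteinQuotient → Prop} (zero : P 0)
    (add : ∀ f, P f → P (zeta + f)) (k : ZMod (3 ^ e * 9)) : P (zetaHom e k) := by
  obtain ⟨n, rfl⟩ := ZMod.natCast_zmod_surjective k
  induction n with
  | zero => simpa using zero
  | succ n ih => rw [Nat.cast_succ, add_comm, map_add, zetaHom_one]; exact add _ ih

lemma zetaHom_zmodMul [NeZero e] (a : ZMod 9) : zetaHom e (zmodMul (3 ^ e) 9 a) = 0 := by
  obtain ⟨d, rfl⟩ := Nat.exists_eq_succ_of_ne_zero (NeZero.ne e)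
  obtain ⟨a, rfl⟩ := ZMod.intCast_surjective a
  rw [zmodMul_intCast, ← Int.cast_natCast, ← Int.cast_mul, zetaHom_intCast, pow_succ',
    Nat.cast_mul, mul_assoc, mul_zsmul', natCast_zsmul, three_nsmul_zeta, zsmul_zero]

lemma negConj_zetaHom (k : ZMod (3 ^ e * 9)) (v : EisensteinQuotient) :
    negConj (zetaHom e k v) = zetaHom e (-k) (negConj v) := by
  obtain ⟨n, rfl⟩ := ZMod.intCast_surjective k
  have h : AddSemiconjBy (negConj : AddAut EisensteinQuotient) zeta (-zeta) := by
    ext1 v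
    rw [AddAut.add_apply, AddAut.add_apply, ← zeta_negConj_zeta v, AddAut.neg_apply_self]
  rw [map_neg, zetaHom_intCast, ← zsmul_neg]
  exact DFunLike.congr_fun (h.zsmul_right n) v

lemma residue_zetaHom (k : ZMod (3 ^ e * 9)) (v : EisensteinQuotient) :
    residue (zetaHom e k v) = residue v :=
  zetaHom_induction e (P := fun f => residue (f v) = residue v) rfl
    (fun f hf => by rw [AddAut.add_apply, residue_zeta, hf]) k

end EisensteinQuotient

/-! ### The group of order `3 ^ (7 + e)` -/

open EisensteinQuotient TwistedHeisenberg

/-- The data of the group: `x` acts on the lattice as `ζ`, and the centre `ZMod 9` of the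
Heisenberg group is embedded antidiagonally, through `x ^ 3 ^ e` and through the multiples of
`λ ^ 4 = 9`. -/
def eisensteinData (e : ℕ) [NeZero e] (c : (ZMod 9)ˣ) :
    HeisenbergData (ZMod (3 ^ e * 9)) EisensteinQuotient (ZMod 9) where
  act := zetaHom e
  form := form
  toK := (zmodMul (3 ^ e) 9).comp (AddMonoidHom.mulLeft (c : ZMod 9))
  toV := nineMul
  form_self v := by rw [form_apply, sub_self, mul_zero]
  form_act k u v := zetaHom_induction e (P := fun f => form (f u) (f v) = form u v) rfl
    (fun f hf => by rw [AddAut.add_apply, AddAut.add_apply, form_zeta, hf]) k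
  form_toV := form_nineMul
  act_toK a := zetaHom_zmodMul e _
  act_toV k a := zetaHom_induction e (P := fun f => f (nineMul a) = nineMul a) rfl
    (fun f hf => by rw [AddAut.add_apply, hf, zeta_nineMul]) k

/-- The group `G` of the theorem, where `c` is the exponent of `x ^ 3 ^ e` in the relation
`t₃ = s₅ * (x ^ 3 ^ e) ^ c`. -/
abbrev EisensteinGroup (e : ℕ) [NeZero e] (c : (ZMod 9)ˣ) : Type :=
  TwistedHeisenberg (eisensteinData e c)

namespace EisensteinGroup

variable (e : ℕ) [NeZero e] (c : (ZMod 9)ˣ)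

/-- The generator `x`. -/
def genX : EisensteinGroup e c := ofK _ (ofAdd 1)

/-- The generator `y`. -/
def genY : EisensteinGroup e c := heis _ (1, 0) 0

lemma comm'_heis_genX (u : EisensteinQuotient) (a : ZMod 9) :
    comm' (heis _ u a) (genX e c) = heis _ (zeta u - u) (-form u (zeta u)) := by
  rw [genX, comm'_heis_ofK]
  change heis _ (zetaHom e 1 u - u) (-form u (zetaHom e 1 u)) = _
  rw [zetaHom_one]

lemma sgen_two : sgen (genX e c) (genY e c) 2 = heis _ (0, 1) 5 := by
  rw [sgen, genY, comm'_heis_genX]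
  rfl

lemma sgen_three : sgen (genX e c) (genY e c) 3 = heis _ (-3, -3) 6 := by
  rw [sgen, sgen_two, comm'_heis_genX]
  rfl

lemma sgen_four : sgen (genX e c) (genY e c) 4 = heis _ (9, -3) 0 := by
  rw [sgen, sgen_three, comm'_heis_genX]
  rfl

lemma sgen_five : sgen (genX e c) (genY e c) 5 = heis _ (9, 0) 0 := by
  rw [sgen, sgen_four, comm'_heis_genX]
  rfl

lemma tgenD_three : tgenD (genX e c) (genY e c) 3 = heis _ 0 1 := by
  rw [tgenD, sgen_two, genY, comm'_heis_heis]
  rfl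

lemma genY_pow_three : genY e c ^ 3 =
    sgen (genX e c) (genY e c) 3 ^ 2 * sgen (genX e c) (genY e c) 4 * heis _ 0 (3 * 2) := by
  rw [sgen_three, sgen_four, genY, heis_pow, heis_pow, heis_mul_heis, heis_mul_heis]
  rfl

lemma sgen_two_pow_three : sgen (genX e c) (genY e c) 2 ^ 3 =
    sgen (genX e c) (genY e c) 4 ^ 2 * sgen (genX e c) (genY e c) 5 * heis _ 0 (3 * 2) := by
  rw [sgen_two, sgen_four, sgen_five, heis_pow, heis_pow, heis_mul_heis, heis_mul_heis]
  rfl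

lemma sgen_three_pow_three : sgen (genX e c) (genY e c) 3 ^ 3 =
    sgen (genX e c) (genY e c) 5 ^ 2 := by
  rw [sgen_three, sgen_five, heis_pow, heis_pow]
  rfl

lemma genX_pow : genX e c ^ 3 ^ e = heis _ (-nineMul c⁻¹.val) c⁻¹.val := by
  have h : zmodMul (3 ^ e) 9 1 = 3 ^ e • 1 := by
    rw [← Int.cast_one, zmodMul_intCast, Int.cast_one, nsmul_eq_mul]
  rw [genX, ← map_pow, ← ofAdd_nsmul, ← h, ← c.mul_inv]
  ext1
  · rfl
  · exact (neg_add_cancel (nineMul c⁻¹.val)).symm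

lemma genX_pow_pow_three : (genX e c ^ 3 ^ e) ^ 3 = heis _ 0 (3 * c⁻¹.val) := by
  have h : ∀ a : ZMod 9, 3 • -nineMul a = 0 := by decide
  rw [genX_pow, heis_pow, h, nsmul_eq_mul]
  rfl

lemma tgenD_three_eq (n : ℕ) (hn : (n : ZMod 9) = c) : tgenD (genX e c) (genY e c) 3 =
    sgen (genX e c) (genY e c) 5 * (genX e c ^ 3 ^ e) ^ n := by
  rw [tgenD_three, sgen_five, genX_pow, heis_pow, heis_mul_heis, smul_neg, ← map_nsmul,
    nsmul_eq_mul, hn, Units.mul_inv]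
  rfl

/-- The map to the abelianization. -/
def abMap : EisensteinGroup e c →* Multiplicative (ZMod (3 ^ e) × ZMod 3) :=
  mapProd (redLeft (3 ^ e) 9).toAddMonoidHom residue
    (fun _ => redLeft_zmodMul _) residue_nineMul (residue_zetaHom e)

lemma abMap_surjective : Function.Surjective (abMap e c) :=
  mapProd_surjective redLeft_surjective residue_surjective

lemma ker_abMap : (abMap e c).ker = commutator (EisensteinGroup e c) :=
  ker_mapProd_eq_commutator (fun a => ⟨(0, a), (1, 0), two_nsmul_form a⟩)
    (fun k hk => by
      obtain ⟨a, rfl⟩ := exists_zmodMul_eq_of_redLeft_eq_zero hk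
      exact ⟨c⁻¹.val * a, congrArg (zmodMul _ _) (c.mul_inv_cancel_left a)⟩)
    (fun v hv => by
      obtain ⟨u, hu⟩ := exists_zeta_sub_eq hv
      exact ⟨1, u, (congrArg (fun f => f u - u) (zetaHom_one e)).trans hu⟩)

/-- The abelianization of the group. -/
noncomputable def abelianizationEquiv :
    Abelianization (EisensteinGroup e c) ≃* Multiplicative (ZMod (3 ^ e) × ZMod 3) :=
  (QuotientGroup.quotientMulEquivOfEq (ker_abMap e c).symm).trans
    (QuotientGroup.quotientKerEquivOfSurjective _ (abMap_surjective e c))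

theorem derivedSeries_two : derivedSeries (EisensteinGroup e c) 2 =
    (AddSubgroup.zmultiples (3 : ZMod 9)).toSubgroup.map (central (eisensteinData e c)) :=
  derivedSeries_two_eq_map_central (ker_abMap e c) _
    (fun _ _ => two_nsmul_form_mem) fun _ => exists_two_nsmul_form_eq

lemma card_derivedSeries_two : Nat.card (derivedSeries (EisensteinGroup e c) 2) = 3 := by
  have central_inj : Function.Injective (central (eisensteinData e c)) :=
    central_injective (zmodMul_injective.comp c.isUnit.mul_right_injective)
  have order_three : addOrderOf (3 : ZMod 9) = 3 :=
    ZMod.addOrderOf_coe 3 (by decide : 9 ≠ 0)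
  rw [derivedSeries_two, Subgroup.card_map_of_injective central_inj]
  exact (Nat.card_zmultiples (3 : ZMod 9)).trans order_three

lemma heis_three_mul_mem (a : ZMod 9) :
    heis _ 0 (3 * a) ∈ derivedSeries (EisensteinGroup e c) 2 := by
  rw [derivedSeries_two]
  exact ⟨ofAdd (3 * a), three_mul_mem_zmultiples a, rfl⟩

lemma card_eq : Nat.card (EisensteinGroup e c) = 3 ^ (7 + e) := by
  rw [TwistedHeisenberg.card_eq, Nat.card_prod, Nat.card_zmod, Nat.card_zmod, Nat.card_zmod]
  ring

lemma card_quotient_derivedSeries_two :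
    Nat.card (EisensteinGroup e c ⧸ derivedSeries (EisensteinGroup e c) 2) = 3 ^ (6 + e) := by
  have h := Subgroup.card_eq_card_quotient_mul_card_subgroup (derivedSeries (EisensteinGroup e c) 2)
  rw [card_eq, card_derivedSeries_two, show 7 + e = 6 + e + 1 by ring, pow_succ] at h
  exact (Nat.eq_of_mul_eq_mul_right three_pos h).symm

lemma derivedSeries_two_ne_bot : derivedSeries (EisensteinGroup e c) 2 ≠ ⊥ := by
  intro h
  have := card_derivedSeries_two e c
  rw [h, Subgroup.card_bot] at this
  norm_num at this

lemma isSigmaGroup : IsSigmaGroup (EisensteinGroup e c) := by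
  let σ : EisensteinGroup e c ≃* EisensteinGroup e c :=
    negMap negConj (negConj_zetaHom e) form_negConj negConj_nineMul
  refine isSigmaGroup_of_mul_mem_commutator σ fun p => ?_
  have abMap_σ : abMap e c (σ p) = (abMap e c p)⁻¹ :=
    Prod.ext (map_neg (redLeft (3 ^ e) 9) p.k) (residue_negConj p.v)
  rw [← ker_abMap, MonoidHom.mem_ker, map_mul, abMap_σ, inv_mul_cancel]

lemma closure_genX_genY : Subgroup.closure {genX e c, genY e c} = ⊤ := by
  set S := Subgroup.closure {genX e c, genY e c}
  have x_mem : genX e c ∈ S := Subgroup.subset_closure (Set.mem_insert _ _)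
  have y_mem : genY e c ∈ S := Subgroup.subset_closure (Set.mem_insert_of_mem _ rfl)
  have comm'_mem {g h : EisensteinGroup e c} (hg : g ∈ S) (hh : h ∈ S) : comm' g h ∈ S :=
    mul_mem (mul_mem (mul_mem (inv_mem hg) (inv_mem hh)) hg) hh
  have s₂_mem : heis _ (0, 1) 5 ∈ S := sgen_two e c ▸ comm'_mem y_mem x_mem
  have central_mem (a : ZMod 9) : heis _ 0 a ∈ S := by
    obtain ⟨n, rfl⟩ := ZMod.natCast_zmod_surjective a
    have t₃_mem : heis _ 0 1 ∈ S := tgenD_three e c ▸ comm'_mem (comm'_mem y_mem x_mem) y_mem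
    simpa only [heis_pow, smul_zero, nsmul_one] using pow_mem t₃_mem n
  have x_pow_mem (k : ZMod (3 ^ e * 9)) : ofK _ (ofAdd k) ∈ S := by
    obtain ⟨n, rfl⟩ := ZMod.natCast_zmod_surjective k
    rw [← nsmul_one, ofAdd_nsmul, map_pow]
    exact pow_mem x_mem n
  refine eq_top_of_heis_mem closure_one_lambda x_pow_mem central_mem ?_
  rintro u (rfl | rfl)
  · exact ⟨0, y_mem⟩
  · exact ⟨5, s₂_mem⟩

end EisensteinGroup

open EisensteinGroup

theorem stmt11_general (e c : ℕ) (he : e ≠ 0) (hc : c.Coprime 3) :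
    ∃ (M : Type) (_ : Group M) (_ : Finite M) (x y : M),
      Subgroup.closure {x, y} = ⊤ ∧
      Nat.card M = 3 ^ (6 + e) ∧
      IsMetabelian M ∧
      IsSigmaGroup M ∧
      (x ^ 3 ^ e) ^ 3 = 1 ∧
      y ^ 3 = sgen x y 3 ^ 2 * sgen x y 4 ∧
      sgen x y 2 ^ 3 = sgen x y 4 ^ 2 * sgen x y 5 ∧
      sgen x y 3 ^ 3 = sgen x y 5 ^ 2 ∧
      tgenD x y 3 = sgen x y 5 * (x ^ 3 ^ e) ^ c ∧
      Nonempty (Abelianization M ≃* Multiplicative (ZMod (3 ^ e) × ZMod 3)) ∧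
      ∃ (G : Type) (_ : Group G) (_ : Finite G),
        Nat.card G = 3 ^ (7 + e) ∧
        Nonempty (Abelianization G ≃* Multiplicative (ZMod (3 ^ e) × ZMod 3)) ∧
        IsSigmaGroup G ∧
        derivedSeries G 2 ≠ ⊥ ∧
        derivedSeries G 3 = ⊥ ∧
        ∃ φ : G →* M, Function.Surjective φ ∧ φ.ker = derivedSeries G 2 := by
  have : NeZero e := ⟨he⟩
  let u : (ZMod 9)ˣ := ZMod.unitOfCoprime c (hc.pow_right 2)
  let π := QuotientGroup.mk' (derivedSeries (EisensteinGroup e u) 2)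
  have π_surjective : Function.Surjective π := QuotientGroup.mk'_surjective _
  have π_heis (a : ZMod 9) : π (heis _ 0 (3 * a)) = 1 :=
    (QuotientGroup.eq_one_iff _).2 (heis_three_mul_mem e u a)
  have w_pow := congrArg π (genX_pow_pow_three e u)
  have y_pow := congrArg π (genY_pow_three e u)
  have s₂_pow := congrArg π (sgen_two_pow_three e u)
  have s₃_pow := congrArg π (sgen_three_pow_three e u)
  have t₃_eq := congrArg π (tgenD_three_eq e u c rfl)
  simp only [map_mul, map_pow, map_sgen, map_tgenD, π_heis, mul_one]
    at w_pow y_pow s₂_pow s₃_pow t₃_eq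
  exact ⟨_, inferInstance, inferInstance, π (genX e u), π (genY e u),
    closure_pair_map_of_surjective π_surjective (closure_genX_genY e u),
    card_quotient_derivedSeries_two e u, isMetabelian_quotient_derivedSeries_two,
    (isSigmaGroup e u).quotient _, w_pow, y_pow, s₂_pow, s₃_pow, t₃_eq,
    ⟨(abelianizationQuotientEquiv _ (derivedSeries_antitone _ one_le_two)).trans
      (abelianizationEquiv e u)⟩,
    EisensteinGroup e u, inferInstance, inferInstance, card_eq e u, ⟨abelianizationEquiv e u⟩,
    isSigmaGroup e u, derivedSeries_two_ne_bot e u, derivedSeries_three_eq_bot,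
    π, π_surjective, QuotientGroup.ker_mk' _⟩

theorem stmt11 (e i : ℕ) (he : 5 ≤ e) (hi : i = 2 ∨ i = 3) :
    ∃ (M : Type) (_ : Group M) (_ : Finite M) (x y : M),
      Subgroup.closure {x, y} = ⊤ ∧
      Nat.card M = 3 ^ (6 + e) ∧
      IsMetabelian M ∧
      IsSigmaGroup M ∧
      (x ^ 3 ^ e) ^ 3 = 1 ∧
      y ^ 3 = sgen x y 3 ^ 2 * sgen x y 4 ∧
      sgen x y 2 ^ 3 = sgen x y 4 ^ 2 * sgen x y 5 ∧
      sgen x y 3 ^ 3 = sgen x y 5 ^ 2 ∧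
      tgenD x y 3 = sgen x y 5 * (x ^ 3 ^ e) ^ (i - 1) ∧
      Nonempty (Abelianization M ≃* Multiplicative (ZMod (3 ^ e) × ZMod 3)) ∧
      ∃ (G : Type) (_ : Group G) (_ : Finite G),
        Nat.card G = 3 ^ (7 + e) ∧
        Nonempty (Abelianization G ≃* Multiplicative (ZMod (3 ^ e) × ZMod 3)) ∧
        IsSigmaGroup G ∧
        derivedSeries G 2 ≠ ⊥ ∧
        derivedSeries G 3 = ⊥ ∧
        ∃ φ : G →* M, Function.Surjective φ ∧ φ.ker = derivedSeries G 2 := by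
  refine stmt11_general e (i - 1) (by lia) ?_
  rcases hi with rfl | rfl <;> decide
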